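/- Let a be a nonzero element of the prime subfield F_p ⊆ F_q, let b ∈ F_q^*, and let v ∈ Γ satisfy Tr_{q/t}(bv) = 0. If Tr(v^{p^t−1}) = 0, then N(a,b) = p^{2m−2} − 1 + (p^{m−2} + p^{m+t−2})(p−1) − p^{m−2}·S. -/

import Mathlib

open Finset

/-- The elements of a finite subfield `E` are the solutions of `x ^ #E = x`. -/
theorem Subfield.mem_iff_pow_natCard_eq {F : Type*} [Field F] (E : Subfield F) [Finite E] (x : F) :
    x ∈ E ↔ x ^ Nat.card E = x := by
  classical
  have := Fintype.ofFinite E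
  constructor
  · intro hx
    have h := congrArg Subtype.val (FiniteField.pow_card (⟨x, hx⟩ : E))
    simpa [Nat.card_eq_fintype_card] using h
  · intro hx
    have h1 : 1 < Nat.card E := Finite.one_lt_card
    have hne := FiniteField.X_pow_card_sub_X_ne_zero F h1
    have hdeg := FiniteField.X_pow_card_sub_X_natDegree_eq F h1
    set P : Polynomial F := Polynomial.X ^ Nat.card E - Polynomial.X with hP
    have hroot (y : F) : y ∈ P.roots.toFinset ↔ y ^ Nat.card E = y := by
      rw [Multiset.mem_toFinset, Polynomial.mem_roots hne, Polynomial.IsRoot.def, hP,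
        Polynomial.eval_sub, Polynomial.eval_pow, Polynomial.eval_X, sub_eq_zero]
    have hsub : (univ : Finset E).map ⟨Subtype.val, Subtype.val_injective⟩ ⊆ P.roots.toFinset := by
      intro y hy
      obtain ⟨e, -, rfl⟩ := Finset.mem_map.1 hy
      have h := congrArg Subtype.val (FiniteField.pow_card e)
      rw [← Nat.card_eq_fintype_card] at h
      exact (hroot _).2 h
    have heq := eq_of_subset_of_card_le hsub (by
      rw [card_map, card_univ, ← Nat.card_eq_fintype_card]
      exact (Multiset.toFinset_card_le _).trans ((Polynomial.card_roots' P).trans hdeg.le))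
    obtain ⟨e, -, rfl⟩ := Finset.mem_map.1 (heq ▸ (hroot x).2 hx)
    exact e.2

/-- All fibres of a surjective homomorphism of finite groups have the same size. -/
theorem AddMonoidHom.card_fiber_mul_card {G H : Type*} [AddGroup G] [AddGroup H] [Fintype G]
    [Fintype H] [DecidableEq H] (f : G →+ H) (hf : Function.Surjective f) (c : H) :
    #{g | f g = c} * Fintype.card H = Fintype.card G := by
  rw [← card_univ (α := G), card_eq_sum_card_fiberwise (s := univ) (f := f) (t := univ) (by simp),
    sum_congr rfl fun d _ => AddMonoidHom.card_fiber_eq_of_mem_range f (hf d) (hf c)]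
  simp [mul_comm]

section Trace

variable {K F : Type*} [Field K] [Field F] [Finite F] [Algebra K F] (E : Subfield F)

theorem trace_mul_subfield [Algebra K E] [IsScalarTower K E F] (w : F) (s : E) :
    Algebra.trace K F (w * s) = Algebra.trace K E (s * Algebra.trace E F w) := by
  have : Finite K := Finite.of_injective _ (algebraMap K F).injective
  rw [← Algebra.trace_trace (S := E), mul_comm, show (s : F) * w = s • w from rfl, map_smul,
    smul_eq_mul]

theorem trace_mul_subfield_surjective [Algebra K E] [IsScalarTower K E F] {w : F}
    (hw : Algebra.trace E F w ≠ 0) :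
    Function.Surjective fun s : E => Algebra.trace K F (w * s) := by
  have : Finite K := Finite.of_injective _ (algebraMap K F).injective
  intro c
  obtain ⟨e, he⟩ := Algebra.trace_surjective K E c
  refine ⟨e / Algebra.trace E F w, ?_⟩
  simp only [trace_mul_subfield, div_mul_cancel₀ _ hw, he]

theorem trace_eq_zero_iff_pow_card_sub_one (hE : Module.finrank E F = 2) {w : F} (hw : w ≠ 0) :
    Algebra.trace E F w = 0 ↔ w ^ (Nat.card E - 1) = -1 := by
  have h1 : 0 < Nat.card E := Nat.card_pos
  have h := FiniteField.algebraMap_trace_eq_sum_pow E F w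
  rw [hE] at h
  simp only [sum_range_succ, range_zero, sum_empty, pow_zero, pow_one, zero_add] at h
  rw [← map_eq_zero (algebraMap E F), h, eq_neg_iff_add_eq_zero]
  obtain ⟨n, hn⟩ := Nat.exists_eq_succ_of_ne_zero h1.ne'
  rw [hn, Nat.succ_sub_one, show w + w ^ n.succ = w * (w ^ n + 1) by rw [pow_succ]; ring]
  simp [hw]

variable [DecidableEq F] [Fintype F]

/-- A fibre of `y ↦ y ^ (#E - 1)` on nonzero elements is a coset `u * Eˣ`. -/
theorem card_filter_pow_eq [Fintype E] {u : F} (hu : u ≠ 0) (P : F → Prop) [DecidablePred P] :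
    #{y : F | y ≠ 0 ∧ y ^ (Nat.card E - 1) = u ^ (Nat.card E - 1) ∧ P y}
      = #{s : E | s ≠ 0 ∧ P (u * s)} := by
  have h1 : Nat.card E - 1 + 1 = Nat.card E := Nat.sub_add_cancel Nat.card_pos
  have hE (s : F) (hs : s ≠ 0) : s ∈ E ↔ s ^ (Nat.card E - 1) = 1 := by
    rw [E.mem_iff_pow_natCard_eq]
    conv_lhs => rw [← h1, pow_succ]
    exact mul_eq_right₀ hs
  symm
  refine card_bij (fun s _ => u * (s : F)) ?_ ?_ ?_
  · intro s hs
    simp only [mem_filter, mem_univ, true_and] at hs ⊢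
    have hs0 : (s : F) ≠ 0 := by simpa using hs.1
    exact ⟨mul_ne_zero hu hs0, by rw [mul_pow, (hE s hs0).1 s.2, mul_one], hs.2⟩
  · intro s _ s' _ h
    exact Subtype.ext (mul_left_cancel₀ hu h)
  · intro y hy
    simp only [mem_filter, mem_univ, true_and] at hy
    have hmem : y / u ∈ E := by
      rw [hE _ (div_ne_zero hy.1 hu), div_pow, hy.2.1, div_self (pow_ne_zero _ hu)]
    refine ⟨⟨y / u, hmem⟩, ?_, mul_div_cancel₀ _ hu⟩
    simp only [mem_filter, mem_univ, true_and, mul_div_cancel₀ _ hu]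
    exact ⟨fun h => div_ne_zero hy.1 hu (congrArg Subtype.val h), hy.2.2⟩

/-- Every element of the norm-one group is a `(#E - 1)`-st power. -/
theorem exists_pow_card_sub_one_eq (hF : Fintype.card F = Nat.card E ^ 2) {x : F}
    (hx : x ^ (Nat.card E + 1) = 1) : ∃ u : F, u ≠ 0 ∧ u ^ (Nat.card E - 1) = x := by
  have hx0 : x ≠ 0 := by
    rintro rfl
    simp at hx
  obtain ⟨g, hg⟩ := IsCyclic.exists_generator (α := Fˣ)
  obtain ⟨k, hk⟩ := (mem_powers_iff_mem_zpowers (x := g)).2 (hg (Units.mk0 x hx0))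
  have ho : orderOf g = (Nat.card E + 1) * (Nat.card E - 1) := by
    rw [orderOf_eq_card_of_forall_mem_zpowers hg, Nat.card_eq_fintype_card, Fintype.card_units, hF,
      ← Nat.sq_sub_sq, one_pow]
  have hk1 : g ^ (k * (Nat.card E + 1)) = 1 := by
    simp only at hk
    rw [pow_mul, hk]
    ext
    simpa using hx
  have hd := orderOf_dvd_of_pow_eq_one hk1
  rw [ho, mul_comm k] at hd
  obtain ⟨j, rfl⟩ := Nat.dvd_of_mul_dvd_mul_left (Nat.succ_pos _) hd
  refine ⟨(g ^ j : Fˣ), Units.ne_zero _, ?_⟩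
  rw [← Units.val_pow_eq_pow_val, ← pow_mul, mul_comm j]
  exact congrArg Units.val hk

theorem card_norm_one (hF : Fintype.card F = Nat.card E ^ 2) :
    #{x : F | x ^ (Nat.card E + 1) = 1} = Nat.card E + 1 := by
  have := Fintype.ofFinite E
  have hE1 : 1 < Nat.card E := Finite.one_lt_card
  have h := card_eq_sum_card_fiberwise (s := ({y : F | y ≠ 0} : Finset F))
    (f := fun y => y ^ (Nat.card E - 1)) (t := {x : F | x ^ (Nat.card E + 1) = 1}) (by
      intro y hy
      simp only [coe_filter, mem_univ, true_and, Set.mem_ofPred_eq] at hy ⊢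
      rw [← pow_mul, mul_comm, ← Nat.sq_sub_sq, one_pow, ← hF]
      exact FiniteField.pow_card_sub_one_eq_one y hy)
  rw [sum_congr rfl (g := fun _ => Nat.card E - 1), sum_const, smul_eq_mul,
    filter_ne' univ, card_erase_of_mem (mem_univ _), card_univ, hF,
    show Nat.card E ^ 2 - 1 = (Nat.card E + 1) * (Nat.card E - 1) by
      rw [← Nat.sq_sub_sq, one_pow]] at h
  · exact (Nat.eq_of_mul_eq_mul_right (by lia) h).symm
  · intro x hx
    obtain ⟨u, hu, rfl⟩ := exists_pow_card_sub_one_eq E hF (by simpa using hx)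
    have h2 := card_filter_pow_eq E hu (fun _ => True)
    simp only [and_true, filter_ne', card_erase_of_mem (mem_univ _), card_univ,
      ← Nat.card_eq_fintype_card] at h2
    rw [filter_filter, h2]

/-- The number of solutions of `Tr (b y) = c (y ^ (#E - 1))`, for a function `c` on the
norm-one group vanishing at the distinguished point `v ^ (#E - 1)`. -/
theorem card_trace_eq_add [Fintype K] [DecidableEq K] [Algebra K E] [IsScalarTower K E F]
    (hF : Fintype.card F = Nat.card E ^ 2) (c : F → K) (h0 : c 0 = 0)
    {b v : F} (hb : b ≠ 0) (hv : v ≠ 0) (hbv : Algebra.trace E F (b * v) = 0)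
    (hcv : c (v ^ (Nat.card E - 1)) = 0) {r : ℕ} (hr : r * Fintype.card K = Nat.card E) :
    #{y : F | Algebra.trace K F (b * y) = c (y ^ (Nat.card E - 1))}
      + #{x ∈ ({x : F | x ^ (Nat.card E + 1) = 1} : Finset F) | c x = 0}
      = Nat.card E * r + Nat.card E + 1 := by
  have := Fintype.ofFinite E
  have hE1 : 1 < Nat.card E := Finite.one_lt_card
  have hfin : Module.finrank E F = 2 := by
    have h := Module.card_eq_pow_finrank (K := E) (V := F)
    rw [hF, ← Nat.card_eq_fintype_card] at h
    exact (Nat.pow_right_injective hE1 h).symm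
  set Δ : Finset F := {x : F | x ^ (Nat.card E + 1) = 1} with hΔ
  have hmaps (y : F) (hy : y ≠ 0) : y ^ (Nat.card E - 1) ∈ Δ := by
    rw [hΔ, mem_filter, ← pow_mul, mul_comm, ← Nat.sq_sub_sq, one_pow, ← hF]
    exact ⟨mem_univ _, FiniteField.pow_card_sub_one_eq_one y hy⟩
  set A : Finset F := {y : F | Algebra.trace K F (b * y) = c (y ^ (Nat.card E - 1))} with hA
  have hA0 : (0 : F) ∈ A := by
    rw [hA, mem_filter, zero_pow (Nat.sub_pos_of_lt hE1).ne', h0, mul_zero, map_zero]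
    exact ⟨mem_univ _, rfl⟩
  have hsum := card_eq_sum_card_fiberwise (s := A.erase 0)
    (f := fun y => y ^ (Nat.card E - 1)) (t := Δ) (by
      intro y hy
      exact hmaps y (ne_of_mem_erase hy))
  have hfib (u : F) (hu : u ≠ 0) :
      #{y ∈ A.erase 0 | y ^ (Nat.card E - 1) = u ^ (Nat.card E - 1)}
        = #{s : E | s ≠ 0 ∧ Algebra.trace K F (b * u * s) = c (u ^ (Nat.card E - 1))} := by
    have h := card_filter_pow_eq E hu
      (fun y => Algebra.trace K F (b * y) = c (u ^ (Nat.card E - 1)))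
    simp only [mul_assoc]
    rw [← h]
    congr 1
    ext y
    simp only [hA, mem_filter, mem_erase, mem_univ, true_and]
    grind
  have hx0 : v ^ (Nat.card E - 1) ∈ Δ := hmaps v hv
  have hspecial : #{y ∈ A.erase 0 | y ^ (Nat.card E - 1) = v ^ (Nat.card E - 1)}
      = Nat.card E - 1 := by
    rw [hfib v hv]
    simp only [trace_mul_subfield, hbv, mul_zero, map_zero, hcv, and_true, filter_ne',
      card_erase_of_mem (mem_univ _), card_univ, ← Nat.card_eq_fintype_card]
  have hgeneric : ∀ x ∈ Δ.erase (v ^ (Nat.card E - 1)),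
      #{y ∈ A.erase 0 | y ^ (Nat.card E - 1) = x} + (if c x = 0 then 1 else 0) = r := by
    intro x hx
    obtain ⟨hxv, hx⟩ := mem_erase.1 hx
    obtain ⟨u, hu, rfl⟩ := exists_pow_card_sub_one_eq E hF (by simpa [hΔ] using hx)
    have htr : Algebra.trace E F (b * u) ≠ 0 := by
      intro h
      rw [trace_eq_zero_iff_pow_card_sub_one E hfin (mul_ne_zero hb hu), mul_pow] at h
      rw [trace_eq_zero_iff_pow_card_sub_one E hfin (mul_ne_zero hb hv), mul_pow, ← h] at hbv
      exact hxv (mul_left_cancel₀ (pow_ne_zero _ hb) hbv.symm)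
    have hcount := AddMonoidHom.card_fiber_mul_card
      (((Algebra.trace K F).toAddMonoidHom.comp (AddMonoidHom.mulLeft (b * u))).comp
        E.subtype.toAddMonoidHom) (trace_mul_subfield_surjective E htr) (c (u ^ (Nat.card E - 1)))
    rw [← Nat.card_eq_fintype_card (α := E)] at hcount
    set B : Finset E := {s : E | Algebra.trace K F (b * u * s) = c (u ^ (Nat.card E - 1))} with hB
    have hBr : #B = r := Nat.eq_of_mul_eq_mul_right Fintype.card_pos (hcount.trans hr.symm)
    have hB0 : 0 ∈ B ↔ c (u ^ (Nat.card E - 1)) = 0 := by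
      simp only [hB, mem_filter, mem_univ, true_and, ZeroMemClass.coe_zero, mul_zero, map_zero]
      exact eq_comm
    have hBe : ({s : E | s ≠ 0 ∧ Algebra.trace K F (b * u * s) = c (u ^ (Nat.card E - 1))} :
        Finset E) = B.erase 0 := by
      ext s
      simp [hB]
    rw [hfib u hu, hBe, ← hBr]
    split_ifs with h
    · exact card_erase_add_one (hB0.2 h)
    · rw [erase_eq_of_notMem (mt hB0.1 h), add_zero]
  have hcard : #(Δ.erase (v ^ (Nat.card E - 1))) = Nat.card E := by
    rw [card_erase_of_mem hx0, hΔ, card_norm_one E hF, Nat.add_sub_cancel]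
  have htotal := sum_congr rfl hgeneric
  rw [sum_add_distrib, sum_const, hcard, smul_eq_mul] at htotal
  rw [← add_sum_erase _ _ hx0, hspecial] at hsum
  rw [card_filter (fun x => c x = 0), ← add_sum_erase _ _ hx0, if_pos hcv,
    ← card_erase_add_one hA0]
  lia

end Trace

/-- Orthogonality: summing the nontrivial additive characters of `ZMod p` at `x`. -/
theorem sum_stdAddChar_mul_compl_zero (p : ℕ) [Fact p.Prime] (x : ZMod p) :
    ∑ z ∈ ({0}ᶜ : Finset (ZMod p)), ZMod.stdAddChar (z * x) = (if x = 0 then (p : ℂ) else 0) - 1 := by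
  have h := AddChar.sum_mulShift x (ZMod.isPrimitive_stdAddChar p)
  rw [← sum_add_sum_compl {0}, ZMod.card] at h
  simp only [sum_singleton, zero_mul, AddChar.map_zero_eq_one] at h
  rw [eq_sub_iff_add_eq', h]
  split_ifs <;> simp

theorem exp_pow_val_eq_stdAddChar (p : ℕ) [NeZero p] (x : ZMod p) :
    Complex.exp (2 * Real.pi * Complex.I / p) ^ x.val = ZMod.stdAddChar x := by
  have h := ZMod.stdAddChar_coe (N := p) x.val
  simp only [Int.cast_natCast, ZMod.natCast_zmod_val] at h
  rw [h, ← Complex.exp_nat_mul]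
  ring_nf

/-- The number of pairs with two prescribed trace conditions, counted along the second
coordinate. -/
theorem card_pairs_trace {K F : Type*} [Field K] [Field F] [Fintype F] [Fintype K]
    [DecidableEq F] [DecidableEq K] [Algebra K F] (g : F → F) (z : K) (b : F) :
    #{xy : F × F | Algebra.trace K F (xy.1 + g xy.2) = 0 ∧
        Algebra.trace K F (algebraMap K F z * xy.1 + b * xy.2) = 0} * Fintype.card K
      = #{y : F | Algebra.trace K F (b * y) = z * Algebra.trace K F (g y)} * Fintype.card F := by
  have hred (x y : F) : (Algebra.trace K F (x + g y) = 0 ∧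
      Algebra.trace K F (algebraMap K F z * x + b * y) = 0) ↔
      Algebra.trace K F x = -Algebra.trace K F (g y) ∧
        Algebra.trace K F (b * y) = z * Algebra.trace K F (g y) := by
    rw [← Algebra.smul_def, map_add, map_add, map_smul, smul_eq_mul, add_eq_zero_iff_eq_neg]
    refine and_congr_right fun h => ?_
    rw [h, mul_neg, neg_add_eq_zero, eq_comm]
  rw [card_eq_sum_card_fiberwise (f := Prod.snd)
    (t := {y : F | Algebra.trace K F (b * y) = z * Algebra.trace K F (g y)}), sum_mul,
    ← smul_eq_mul, ← sum_const]
  · refine sum_congr rfl fun y hy => ?_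
    rw [← AddMonoidHom.card_fiber_mul_card (Algebra.trace K F).toAddMonoidHom
      (Algebra.trace_surjective K F) (-Algebra.trace K F (g y))]
    congr 1
    refine card_bij (fun xy _ => xy.1) ?_ ?_ ?_
    · rintro ⟨x, y'⟩ h
      simp only [mem_filter, mem_univ, true_and, hred] at h
      obtain ⟨h, rfl⟩ := h
      exact mem_filter.2 ⟨mem_univ _, h.1⟩
    · rintro ⟨x, y'⟩ h ⟨x', y''⟩ h' hx
      simp only [mem_filter] at h h'
      simp_all
    · intro x hx
      refine ⟨(x, y), ?_, rfl⟩
      simp only [mem_filter, mem_univ, true_and, hred] at hx hy ⊢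
      exact ⟨⟨hx, hy⟩, trivial⟩
  · rintro ⟨x, y⟩ h
    simp only [coe_filter, mem_univ, true_and, Set.mem_ofPred_eq, hred] at h ⊢
    exact h.2

/-- For `a` a nonzero element of the prime subfield, `b ∈ F_q^*`, and
`v ∈ Γ` with `Tr_{q/t}(bv) = 0`: if `Tr(v^{p^t-1}) = 0` then
`N(a,b) = p^{2m-2} - 1 + (p^{m-2} + p^{m+t-2})(p-1) - p^{m-2}·S`. -/
theorem stmt5 (p t m : ℕ) [Fact p.Prime] (ht : 2 < t) (hm : m = 2 * t)
    (F : Type) [Field F] [Fintype F] [DecidableEq F] [Algebra (ZMod p) F]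
    (hF : Fintype.card F = p ^ m)
    (E : Subfield F) (hE : Nat.card E = p ^ t)
    (α : Fˣ) (hα : ∀ x : Fˣ, x ∈ Subgroup.zpowers α)
    (Γ : Set F) (hΓ : Γ = {v : F | ∃ j ≤ p ^ t, v = (α : F) ^ j})
    (ζ : ℂ) (hζ : ζ = Complex.exp (2 * Real.pi * Complex.I / p))
    (χ : F → ℂ) (hχ : ∀ x, χ x = ζ ^ (Algebra.trace (ZMod p) F x).val)
    (Δ : Finset F) (hΔ : Δ = univ.filter (fun x : F => x ^ (p ^ t + 1) = 1))
    (S : ℂ) (hS : S = ∑ z ∈ ({0}ᶜ : Finset (ZMod p)), ∑ x ∈ Δ, χ (algebraMap (ZMod p) F z * x))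
    (N : F → F → ℕ)
    (hN : ∀ a b : F, N a b = Set.ncard {xy : F × F | xy ≠ (0, 0) ∧
      Algebra.trace (ZMod p) F (xy.1 + xy.2 ^ (p ^ t - 1)) = 0 ∧
      Algebra.trace (ZMod p) F (a * xy.1 + b * xy.2) = 0})
    (z : ZMod p) (hz : z ≠ 0) (a : F) (ha : a = algebraMap (ZMod p) F z)
    (b : F) (hb : b ≠ 0)
    (v : F) (hv : v ∈ Γ) (hbv : Algebra.trace E F (b * v) = 0)
    (htr : Algebra.trace (ZMod p) F (v ^ (p ^ t - 1)) = 0) :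
    (N a b : ℂ) = (p : ℂ) ^ (2 * m - 2) - 1
      + ((p : ℂ) ^ (m - 2) + (p : ℂ) ^ (m + t - 2)) * (p - 1)
      - (p : ℂ) ^ (m - 2) * S := by
  have hp : p.Prime := Fact.out
  have hp0 : (p : ℂ) ≠ 0 := Nat.cast_ne_zero.2 hp.ne_zero
  have : CharP F p := charP_of_injective_algebraMap (algebraMap (ZMod p) F).injective p
  have : CharP E p := E.subtype.charP E.subtype.injective p
  let : Algebra (ZMod p) E := ZMod.algebra E p
  have := IsScalarTower.of_algebraMap_eq' (R := ZMod p) (S := E) (A := F) (Subsingleton.elim _ _)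
  have hFE : Fintype.card F = Nat.card E ^ 2 := by rw [hF, hE, hm, mul_comm, pow_mul]
  have hv0 : v ≠ 0 := by
    rw [hΓ] at hv
    obtain ⟨j, -, rfl⟩ := hv
    exact pow_ne_zero _ α.ne_zero
  obtain ⟨k, rfl⟩ : ∃ k, t = k + 1 := ⟨t - 1, by lia⟩
  have hcount := card_trace_eq_add E hFE (fun x => z * Algebra.trace (ZMod p) F x) (by simp) hb hv0
    hbv (by simp only [hE, htr, mul_zero]) (r := p ^ k) (by rw [ZMod.card, hE, pow_succ])
  have hcardΔ := card_norm_one E hFE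
  simp only [hE, mul_eq_zero, hz, false_or, ← hΔ] at hcount hcardΔ
  have hSval : S = p * (#{x ∈ Δ | Algebra.trace (ZMod p) F x = 0} : ℂ) - (p ^ (k + 1) + 1) := by
    have hsum (x : F) : ∑ z ∈ ({0}ᶜ : Finset (ZMod p)), χ (algebraMap (ZMod p) F z * x)
        = (if Algebra.trace (ZMod p) F x = 0 then (p : ℂ) else 0) - 1 := by
      rw [← sum_stdAddChar_mul_compl_zero]
      refine sum_congr rfl fun w _ => ?_
      rw [hχ, hζ, exp_pow_val_eq_stdAddChar, ← Algebra.smul_def, map_smul, smul_eq_mul]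
    rw [hS, sum_comm, sum_congr rfl fun x _ => hsum x, sum_sub_distrib, ← sum_filter, sum_const,
      sum_const, hcardΔ]
    simp [mul_comm]
  have hpairs := card_pairs_trace (fun y : F => y ^ (p ^ (k + 1) - 1)) z b
  have hNset : N a b + 1 = #{xy : F × F |
      Algebra.trace (ZMod p) F (xy.1 + xy.2 ^ (p ^ (k + 1) - 1)) = 0 ∧
      Algebra.trace (ZMod p) F (algebraMap (ZMod p) F z * xy.1 + b * xy.2) = 0} := by
    set T : Finset (F × F) := {xy : F × F |
      Algebra.trace (ZMod p) F (xy.1 + xy.2 ^ (p ^ (k + 1) - 1)) = 0 ∧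
      Algebra.trace (ZMod p) F (algebraMap (ZMod p) F z * xy.1 + b * xy.2) = 0} with hT
    have h0 : ((0, 0) : F × F) ∈ T := by
      have : p ^ (k + 1) - 1 ≠ 0 :=
        (Nat.sub_pos_of_lt (Nat.one_lt_pow k.succ_ne_zero hp.one_lt)).ne'
      simp [hT, this]
    rw [← card_erase_add_one h0, hN, ← Set.ncard_coe_finset, ha]
    congr 2
    ext xy
    simp only [hT, Set.mem_ofPred_eq, coe_erase, coe_filter, mem_univ, true_and, Set.mem_sdiff,
      Set.mem_singleton_iff, and_comm, ne_eq]
  rw [← hNset, ZMod.card, hF] at hpairs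
  have hpairsC := congrArg (Nat.cast (R := ℂ)) hpairs
  have hcountC := congrArg (Nat.cast (R := ℂ)) hcount
  push_cast at hpairsC hcountC
  rw [← eq_sub_iff_add_eq] at hcountC
  rw [hcountC] at hpairsC
  obtain ⟨n, rfl⟩ : ∃ n, m = n + 2 := ⟨m - 2, by lia⟩
  obtain rfl : n = 2 * k := by lia
  rw [hSval, show 2 * (2 * k + 2) - 2 = 4 * k + 2 by lia, show 2 * k + 2 - 2 = 2 * k by lia,
    show 2 * k + 2 + (k + 1) - 2 = 3 * k + 1 by lia]
  refine mul_right_cancel₀ hp0 ?_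
  rw [← sub_eq_zero] at hpairsC ⊢
  rw [← hpairsC]
  ring
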